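/- arXiv:2205.06613 — 9 statements merged into one kernel-verified Lean document; each statement's English description precedes it below -/
import Mathlib

section
/- Let y, z be real numbers with y ≥ z > 1 and let l be a real number with l ≥ 1. Then ln(y+z−1)·(y+z−1)^l − ln(y)·y^l − ln(z)·z^l > 0. -/
/-!
Writing `x ^ l = x ^ (l - 1) * x` and using that `y` and `z` are both at most `s = y + z - 1`,
the factors `y ^ (l - 1)` and `z ^ (l - 1)` can be replaced by `s ^ (l - 1)`, which reduces the
claim to the case `l = 1`, proved in `mul_log_add_lt`. That case is strict convexity of
`x ↦ x * log x` together with its vanishing at `1`: the pairs `{y, z}` and `{1, s}` have the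
same sum, and `y`, `z` lie strictly between `1` and `s`.
-/

/-- The case `l = 1`. -/
theorem mul_log_add_lt {y z : ℝ} (hy : 1 < y) (hz : 1 < z) :
    y * Real.log y + z * Real.log z < (y + z - 1) * Real.log (y + z - 1) := by
  have hd : 0 < y + z - 2 := by linarith
  have hd' : y + z - 2 ≠ 0 := hd.ne'
  -- The weights that place `y`, and with their roles exchanged `z`, between `1` and `y + z - 1`.
  have ha : 0 < (z - 1) / (y + z - 2) := div_pos (by linarith) hd
  have hb : 0 < (y - 1) / (y + z - 2) := div_pos (by linarith) hd
  have hab : (z - 1) / (y + z - 2) + (y - 1) / (y + z - 2) = 1 := by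
    field_simp
    ring
  have h1 : (1 : ℝ) ∈ Set.Ici (0 : ℝ) := by simp
  have hs : y + z - 1 ∈ Set.Ici (0 : ℝ) := Set.mem_Ici.2 (by linarith)
  have hne : (1 : ℝ) ≠ y + z - 1 := by linarith
  have key1 := Real.strictConvexOn_mul_log.2 h1 hs hne ha hb hab
  have key2 := Real.strictConvexOn_mul_log.2 h1 hs hne hb ha (by rw [add_comm]; exact hab)
  have e1 : (z - 1) / (y + z - 2) * 1 + (y - 1) / (y + z - 2) * (y + z - 1) = y := by
    field_simp
    ring
  have e2 : (y - 1) / (y + z - 2) * 1 + (z - 1) / (y + z - 2) * (y + z - 1) = z := by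
    field_simp
    ring
  simp only [smul_eq_mul, e1, e2, Real.log_one, mul_zero, zero_add] at key1 key2
  calc y * Real.log y + z * Real.log z
      < (y - 1) / (y + z - 2) * ((y + z - 1) * Real.log (y + z - 1))
        + (z - 1) / (y + z - 2) * ((y + z - 1) * Real.log (y + z - 1)) := add_lt_add key1 key2
    _ = ((z - 1) / (y + z - 2) + (y - 1) / (y + z - 2))
        * ((y + z - 1) * Real.log (y + z - 1)) := by ring
    _ = (y + z - 1) * Real.log (y + z - 1) := by rw [hab, one_mul]

/-- If `y ≥ z > 1` and `l ≥ 1`, then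
`ln(y+z−1)·(y+z−1)^l − ln(y)·y^l − ln(z)·z^l > 0`. -/
theorem stmt1 (y z l : ℝ) (hyz : z ≤ y) (hz : 1 < z) (hl : 1 ≤ l) :
    0 < Real.log (y + z - 1) * (y + z - 1) ^ l - Real.log y * y ^ l
          - Real.log z * z ^ l := by
  have hy : 1 < y := hz.trans_le hyz
  have split : ∀ x : ℝ, 0 < x → x ^ l = x ^ (l - 1) * x := fun x hx => by
    rw [Real.rpow_sub_one hx.ne', div_mul_cancel₀ _ hx.ne']
  rw [split y (by linarith), split z (by linarith), split (y + z - 1) (by linarith)]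
  have hyp : y ^ (l - 1) ≤ (y + z - 1) ^ (l - 1) :=
    Real.rpow_le_rpow (by linarith) (by linarith) (by linarith)
  have hzp : z ^ (l - 1) ≤ (y + z - 1) ^ (l - 1) :=
    Real.rpow_le_rpow (by linarith) (by linarith) (by linarith)
  have hsp : 0 < (y + z - 1) ^ (l - 1) := Real.rpow_pos_of_pos (by linarith) _
  have hly : 0 ≤ y * Real.log y := mul_nonneg (by linarith) (Real.log_nonneg hy.le)
  have hlz : 0 ≤ z * Real.log z := mul_nonneg (by linarith) (Real.log_nonneg hz.le)
  have i1 := mul_le_mul_of_nonneg_right hyp hly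
  have i2 := mul_le_mul_of_nonneg_right hzp hlz
  have i3 := mul_lt_mul_of_pos_left (mul_log_add_lt hy hz) hsp
  linarith
end

section
/- Let N, k, s be positive integers and let d_1, …, d_k and a_0, a_1, …, a_N be positive integers satisfying: d_1 ≤ d_2 ≤ … ≤ d_k; a_j = 1 for 0 ≤ j ≤ s−1; if s ≤ N then 1 < a_s ≤ a_{s+1} ≤ … ≤ a_N; k ≤ N+1; d_i ≥ 2 for all 1 ≤ i ≤ k; d_i > a_{N−k+i} for all 1 ≤ i ≤ k; and Σ_{j=s}^{N} a_j ≤ Σ_{i=1}^{k} d_i < Σ_{j=s}^{N} a_j + s. Then the function f(l) = Σ_{i=1}^{k} d_i^l − Σ_{j=0}^{N} a_j^l is monotonically increasing for real l ≥ 1; that is, for all real numbers l₁, l₂ with 1 ≤ l₁ < l₂ one has f(l₁) < f(l₂). -/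
/-!
Put `ψ x = x ^ (l₂ - 1) - x ^ (l₁ - 1)`, so that `x * ψ x = x ^ l₂ - x ^ l₁` and the claim is
`∑ a_j ψ(a_j) < ∑ d_i ψ(d_i)`. On `x ≥ 1` the function `ψ` is strictly increasing with `ψ 1 = 0`
(`psi_lt`). Comparing the sum of all weights with the sum of the degrees rules out `k = N + 1`.
So let `b_i < d_i` be the top `k` weights and let `c` be the smallest of them. Then
`d_i ψ(d_i) - b_i ψ(b_i) > (d_i - b_i) ψ(b_i) ≥ (d_i - b_i) ψ(c)`. The other weights are at most
`c`; those different from `1` contribute at most `ψ(c)` times their sum, which is at most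
`∑ (d_i - b_i)` because `∑ d_i` bounds the sum of all the weights different from `1`. Adding up
gives the claim (`sum_mul_lt_sum_mul`).
-/

/-- Strict monotonicity of `x ^ (l₂ - 1) - x ^ (l₁ - 1)` on `x ≥ 1`, seen from the factorization
`x ^ (l₁ - 1) * (x ^ (l₂ - l₁) - 1)`. -/
theorem psi_lt {l₁ l₂ x y : ℝ} (hl₁ : 1 ≤ l₁) (hl₁₂ : l₁ < l₂) (hx : 1 ≤ x) (hxy : x < y) :
    x ^ (l₂ - 1) - x ^ (l₁ - 1) < y ^ (l₂ - 1) - y ^ (l₁ - 1) := by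
  have key : ∀ z : ℝ, 1 ≤ z →
      z ^ (l₂ - 1) - z ^ (l₁ - 1) = z ^ (l₁ - 1) * (z ^ (l₂ - l₁) - 1) := by
    intro z hz
    rw [mul_sub, ← Real.rpow_add (by linarith)]
    ring_nf
  rw [key x hx, key y (by linarith)]
  have h1 : x ^ (l₁ - 1) ≤ y ^ (l₁ - 1) :=
    Real.rpow_le_rpow (by linarith) hxy.le (by linarith)
  have h2 : x ^ (l₂ - l₁) < y ^ (l₂ - l₁) :=
    Real.rpow_lt_rpow (by linarith) hxy (by linarith)
  have h3 : 1 ≤ x ^ (l₂ - l₁) := Real.one_le_rpow hx (by linarith)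
  have h4 : 0 < x ^ (l₁ - 1) := Real.rpow_pos_of_pos (by linarith) _
  calc x ^ (l₁ - 1) * (x ^ (l₂ - l₁) - 1) < x ^ (l₁ - 1) * (y ^ (l₂ - l₁) - 1) := by
        apply mul_lt_mul_of_pos_left _ h4
        linarith
    _ ≤ y ^ (l₁ - 1) * (y ^ (l₂ - l₁) - 1) := by
        apply mul_le_mul_of_nonneg_right h1
        linarith

/-- The weighted comparison for an arbitrary strictly increasing `ψ` vanishing at `1`: the weights
are `a 0 ≤ … ≤ a (M + k - 1)`, the first `s` of them equal to `1`, and `d i` exceeds the `i`-th of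
the top `k` weights. -/
theorem sum_mul_lt_sum_mul (M k s : ℕ) (d a : ℕ → ℕ) (ψ : ℕ → ℝ) (hk : 0 < k)
    (hψ : ∀ x y, 1 ≤ x → x < y → ψ x < ψ y) (hψ1 : ψ 1 = 0)
    (ha_pos : ∀ j, j < M + k → 1 ≤ a j) (ha1 : ∀ j, j < s → a j = 1)
    (ha_mono : ∀ i j, i ≤ j → j < M + k → a i ≤ a j)
    (hda : ∀ i, i < k → a (M + i) < d i)
    (hsum : ∑ j ∈ Finset.Ico s (M + k), a j ≤ ∑ i ∈ Finset.range k, d i) :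
    ∑ j ∈ Finset.range (M + k), (a j : ℝ) * ψ (a j) <
      ∑ i ∈ Finset.range k, (d i : ℝ) * ψ (d i) := by
  have hψ' : ∀ x y, 1 ≤ x → x ≤ y → ψ x ≤ ψ y := by
    intro x y hx hxy
    rcases hxy.eq_or_lt with rfl | h
    · exact le_rfl
    · exact (hψ x y hx h).le
  have hc : 1 ≤ a M := ha_pos M (by omega)
  have hc0 : 0 ≤ ψ (a M) := hψ1 ▸ hψ' 1 (a M) le_rfl hc
  have top : ∑ i ∈ Finset.range k,
        ((a (M + i) : ℝ) * ψ (a (M + i)) + ((d i : ℝ) - a (M + i)) * ψ (a M)) <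
      ∑ i ∈ Finset.range k, (d i : ℝ) * ψ (d i) := by
    apply Finset.sum_lt_sum_of_nonempty (by simpa using hk.ne')
    intro i hi
    have hi := Finset.mem_range.1 hi
    have hlt := hda i hi
    have h1 := ha_pos (M + i) (by omega)
    have h2 := hψ _ _ h1 hlt
    have h3 := hψ' _ _ hc (ha_mono M (M + i) (by omega) (by omega))
    have h4 : (a (M + i) : ℝ) < d i := by exact_mod_cast hlt
    have h5 : (0 : ℝ) ≤ a (M + i) := by positivity
    nlinarith [mul_nonneg (sub_nonneg.2 h4.le) (sub_nonneg.2 h3),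
      mul_pos (h5.trans_lt h4) (sub_pos.2 h2)]
  have bot : ∑ j ∈ Finset.range M, (a j : ℝ) * ψ (a j) ≤
      (∑ i ∈ Finset.range k, ((d i : ℝ) - a (M + i))) * ψ (a M) := by
    have hnn : 0 ≤ ∑ i ∈ Finset.range k, ((d i : ℝ) - a (M + i)) := by
      apply Finset.sum_nonneg
      intro i hi
      have h := hda i (Finset.mem_range.1 hi)
      have h4 : (a (M + i) : ℝ) < d i := by exact_mod_cast h
      linarith
    rcases le_total s M with h | h
    · rw [← Finset.sum_range_add_sum_Ico _ h, Finset.sum_eq_zero, zero_add]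
      · calc ∑ j ∈ Finset.Ico s M, (a j : ℝ) * ψ (a j)
            ≤ ∑ j ∈ Finset.Ico s M, (a j : ℝ) * ψ (a M) := by
              apply Finset.sum_le_sum
              intro j hj
              have hj := Finset.mem_Ico.1 hj
              apply mul_le_mul_of_nonneg_left _ (by positivity)
              exact hψ' _ _ (ha_pos j (by omega)) (ha_mono j M (by omega) (by omega))
          _ = (∑ j ∈ Finset.Ico s M, (a j : ℝ)) * ψ (a M) := by rw [Finset.sum_mul]
          _ ≤ _ := by
              apply mul_le_mul_of_nonneg_right _ hc0
              rw [← Finset.sum_Ico_consecutive _ h (by omega : M ≤ M + k),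
                Finset.sum_Ico_eq_sum_range a M, Nat.add_sub_cancel_left] at hsum
              have : (∑ j ∈ Finset.Ico s M, (a j : ℝ)) + ∑ i ∈ Finset.range k, (a (M + i) : ℝ)
                  ≤ ∑ i ∈ Finset.range k, (d i : ℝ) := by exact_mod_cast hsum
              rw [Finset.sum_sub_distrib]
              linarith
      · intro j hj
        rw [ha1 j (Finset.mem_range.1 hj), hψ1, mul_zero]
    · rw [Finset.sum_eq_zero]
      · exact mul_nonneg hnn hc0
      · intro j hj
        rw [ha1 j (by have := Finset.mem_range.1 hj; omega), hψ1, mul_zero]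
  rw [Finset.sum_add_distrib, ← Finset.sum_mul] at top
  rw [Finset.sum_range_add]
  linarith


/-- Under the combinatorial conditions on the degrees `d₁ ≤ … ≤ d_k` and the weights
`a₀, …, a_N` (with exactly the first `s` of them equal to `1`), the function
`f(l) = Σ d_i^l − Σ a_j^l` is monotonically increasing for real `l ≥ 1`. -/
theorem stmt5 (N k s : ℕ) (d a : ℕ → ℕ)
    (hN : 0 < N) (hk : 0 < k) (hs : 0 < s) (hsN : s ≤ N + 1)
    (hd_mono : ∀ i j, 1 ≤ i → i ≤ j → j ≤ k → d i ≤ d j)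
    (ha_pos : ∀ j, j ≤ N → 0 < a j)
    (ha1 : ∀ j, j < s → a j = 1)
    (has : s ≤ N → 1 < a s)
    (ha_mono : ∀ i j, s ≤ i → i ≤ j → j ≤ N → a i ≤ a j)
    (hkN : k ≤ N + 1)
    (hd2 : ∀ i, 1 ≤ i → i ≤ k → 2 ≤ d i)
    (hda : ∀ i, 1 ≤ i → i ≤ k → a (N - k + i) < d i)
    (hsum1 : ∑ j ∈ Finset.Icc s N, a j ≤ ∑ i ∈ Finset.Icc 1 k, d i)
    (hsum2 : ∑ i ∈ Finset.Icc 1 k, d i < ∑ j ∈ Finset.Icc s N, a j + s)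
    (l₁ l₂ : ℝ) (hl₁ : 1 ≤ l₁) (hl₁₂ : l₁ < l₂) :
    ∑ i ∈ Finset.Icc 1 k, (d i : ℝ) ^ l₁ - ∑ j ∈ Finset.Icc 0 N, (a j : ℝ) ^ l₁ <
      ∑ i ∈ Finset.Icc 1 k, (d i : ℝ) ^ l₂ - ∑ j ∈ Finset.Icc 0 N, (a j : ℝ) ^ l₂ := by
  have hpos : ∀ j, j < N + 1 → 1 ≤ a j := fun j hj => ha_pos j (by omega)
  have hmono : ∀ i j, i ≤ j → j < N + 1 → a i ≤ a j := by
    intro i j hij hj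
    by_cases hi : i < s
    · rw [ha1 i hi]
      exact hpos j hj
    · exact ha_mono i j (by omega) hij (by omega)
  have hIcc1 : ∀ {R : Type} [AddCommMonoid R] (g : ℕ → R),
      ∑ i ∈ Finset.Icc 1 k, g i = ∑ i ∈ Finset.range k, g (i + 1) := by
    intro R _ g
    rw [← Finset.Ico_add_one_right_eq_Icc, Finset.sum_Ico_eq_sum_range, Nat.add_sub_cancel]
    simp only [add_comm]
  rw [← Finset.Ico_add_one_right_eq_Icc s N, hIcc1] at hsum1 hsum2
  have hkN' : k ≤ N := by
    by_contra hlt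
    obtain rfl : k = N + 1 := by omega
    -- Here `N - k` truncates to `0`, so `hda` compares `d i` with `a i` instead of `a (i - 1)`.
    have hall : ∑ j ∈ Finset.Ico s (N + 1), a j + s = ∑ j ∈ Finset.range (N + 1), a j := by
      rw [← Finset.sum_range_add_sum_Ico _ hsN,
        Finset.sum_congr rfl (fun j hj => ha1 j (Finset.mem_range.1 hj))]
      simp [add_comm]
    rw [hall] at hsum2
    refine absurd hsum2 (not_lt.2 ?_)
    apply Finset.sum_le_sum
    intro j hj
    have hj := Finset.mem_range.1 hj
    by_cases hjN : j = N
    · subst hjN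
      have h1 := hda j (by omega) (by omega)
      rw [show j - (j + 1) + j = j by omega] at h1
      exact h1.le.trans (hd_mono j (j + 1) (by omega) (by omega) le_rfl)
    · have h1 := hda (j + 1) (by omega) (by omega)
      rw [show N - (N + 1) + (j + 1) = j + 1 by omega] at h1
      exact (hmono j (j + 1) (by omega) (by omega)).trans h1.le
  obtain ⟨M, hM⟩ : ∃ M, N + 1 = M + k := ⟨N + 1 - k, by omega⟩
  have hψ : ∀ x : ℕ, 1 ≤ x →
      (x : ℝ) * ((x : ℝ) ^ (l₂ - 1) - (x : ℝ) ^ (l₁ - 1)) = (x : ℝ) ^ l₂ - (x : ℝ) ^ l₁ := by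
    intro x hx
    have hx0 : (x : ℝ) ≠ 0 := by positivity
    rw [Real.rpow_sub_one hx0, Real.rpow_sub_one hx0]
    field_simp
  have main := sum_mul_lt_sum_mul M k s (fun i => d (i + 1)) a
    (fun x => (x : ℝ) ^ (l₂ - 1) - (x : ℝ) ^ (l₁ - 1)) hk
    (fun x y hx hxy => psi_lt hl₁ hl₁₂ (by exact_mod_cast hx) (by exact_mod_cast hxy))
    (by simp) (fun j hj => hpos j (by omega)) ha1
    (fun i j hij hj => hmono i j hij (by omega))
    (fun i hi => by
      have := hda (i + 1) (by omega) (by omega)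
      rwa [show N - k + (i + 1) = M + i by omega] at this)
    (by rwa [← hM])
  rw [Finset.sum_congr rfl (fun j hj => hψ (a j)
      (hpos j (by have := Finset.mem_range.1 hj; omega))),
    Finset.sum_congr rfl (fun i hi => hψ (d (i + 1)) (by
      have := Finset.mem_range.1 hi
      have := hd2 (i + 1) (by omega) (by omega)
      omega)),
    Finset.sum_sub_distrib, Finset.sum_sub_distrib, ← hM] at main
  rw [hIcc1, hIcc1, ← Finset.Ico_add_one_right_eq_Icc, ← Finset.range_eq_Ico]
  linarith
end

section
/- Let N, k, s be positive integers and let d_1, …, d_k and a_0, a_1, …, a_N be positive integers satisfying: d_1 ≤ d_2 ≤ … ≤ d_k; a_j = 1 for 0 ≤ j ≤ s−1; if s ≤ N then 1 < a_s ≤ a_{s+1} ≤ … ≤ a_N; k ≤ N+1; d_i ≥ 2 for all 1 ≤ i ≤ k; d_i > a_{N−k+i} for all 1 ≤ i ≤ k; and Σ_{j=s}^{N} a_j ≤ Σ_{i=1}^{k} d_i < Σ_{j=s}^{N} a_j + s. Then for every integer m ≥ 1 one has Σ_{j=0}^{N} a_j^m − Σ_{i=1}^{k} d_i^m > Σ_{j=0}^{N}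 a_j^{m+1} − Σ_{i=1}^{k} d_i^{m+1}. -/
/-!
Put `f x = x ^ m * (x - 1)`, so that `f 1 = 0` and the claim reads `∑ f (a_j) < ∑ f (d_i)`.
Write `f x = x * h x` with `h x = x ^ (m - 1) * (x - 1)`, which is nondecreasing on the positive
integers. Pair each `d_i` with `b_i = a_{N-k+i}`, the `k` largest weights; what is left over are
weights that are at most `A = b_1`.

* Each pair gains `f d - f b > (d - b) * h A` (`gap_lt`).
* Each leftover weight costs `f a ≤ a * h A` (`cost_le`).

If some leftover weight exceeds `1`, the hypothesis `∑ a_j ≤ ∑ d_i` says that the leftover weights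
sum to at most `∑ (d_i - b_i)`, so the gains win. Otherwise the leftover weights contribute `0`
and the pairs alone suffice.
-/

/-- Monotonicity of `x ↦ x ^ n * (x - 1)` on the positive integers. -/
lemma h_mono (n : ℕ) {x y : ℤ} (hx : 1 ≤ x) (hxy : x ≤ y) :
    x ^ n * (x - 1) ≤ y ^ n * (y - 1) := by
  have h : x ^ n ≤ y ^ n := pow_le_pow_left₀ (by linarith) hxy n
  have h0 : 0 ≤ y ^ n := pow_nonneg (by linarith) n
  exact mul_le_mul h (by linarith) (by linarith) h0

lemma cost_le (n : ℕ) {x A : ℤ} (hx : 1 ≤ x) (hxA : x ≤ A) :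
    x ^ (n + 1) * (x - 1) ≤ A ^ n * (A - 1) * x := by
  have := mul_le_mul_of_nonneg_right (h_mono n hx hxA) (by linarith : 0 ≤ x)
  calc x ^ (n + 1) * (x - 1) = x ^ n * (x - 1) * x := by ring
    _ ≤ _ := this

lemma gap_lt (n : ℕ) {A b d : ℤ} (hA : 1 ≤ A) (hAb : A ≤ b) (hbd : b < d) :
    A ^ n * (A - 1) * (d - b) < d ^ (n + 1) * (d - 1) - b ^ (n + 1) * (b - 1) := by
  have h1 := h_mono n hA hAb
  have h2 : b ^ n * (b - 1) < d ^ n * (d - 1) := by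
    have h : b ^ n ≤ d ^ n := pow_le_pow_left₀ (by linarith) hbd.le n
    have h0 : 0 < d ^ n := pow_pos (by linarith) n
    exact mul_lt_mul' h (by linarith) (by linarith) h0
  have h3 : A ^ n * (A - 1) * (d - b) ≤ d ^ n * (d - 1) * (d - b) :=
    mul_le_mul_of_nonneg_right (by linarith) (by linarith)
  have h4 : b ^ n * (b - 1) * b < d ^ n * (d - 1) * b :=
    mul_lt_mul_of_pos_right h2 (by linarith)
  have e1 : d ^ (n + 1) * (d - 1) = d ^ n * (d - 1) * (d - b) + d ^ n * (d - 1) * b := by ring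
  have e2 : b ^ (n + 1) * (b - 1) = b ^ n * (b - 1) * b := by ring
  linarith

/-- Summed form of `gap_lt`. -/
lemma sum_gap_lt (n k : ℕ) (hk : 0 < k) (A : ℤ) (b d : ℕ → ℤ) (hA : 1 ≤ A)
    (hAb : ∀ i < k, A ≤ b i) (hbd : ∀ i < k, b i < d i) :
    A ^ n * (A - 1) * (∑ i ∈ Finset.range k, d i - ∑ i ∈ Finset.range k, b i) <
      ∑ i ∈ Finset.range k, d i ^ (n + 1) * (d i - 1) -
        ∑ i ∈ Finset.range k, b i ^ (n + 1) * (b i - 1) := by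
  rw [← Finset.sum_sub_distrib, ← Finset.sum_sub_distrib, Finset.mul_sum]
  apply Finset.sum_lt_sum_of_nonempty (by simpa using hk.ne')
  intro i hi
  rw [Finset.mem_range] at hi
  exact gap_lt n hA (hAb i hi) (hbd i hi)


/-- Under the combinatorial conditions on the degrees `d₁ ≤ … ≤ d_k` and the weights
`a₀, …, a_N` (with exactly the first `s` of them equal to `1`), for every integer `m ≥ 1`
one has `Σ a_j^m − Σ d_i^m > Σ a_j^{m+1} − Σ d_i^{m+1}`. -/
theorem stmt6 (N k s : ℕ) (d a : ℕ → ℕ)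
    (hN : 0 < N) (hk : 0 < k) (hs : 0 < s) (hsN : s ≤ N + 1)
    (hd_mono : ∀ i j, 1 ≤ i → i ≤ j → j ≤ k → d i ≤ d j)
    (ha_pos : ∀ j, j ≤ N → 0 < a j)
    (ha1 : ∀ j, j < s → a j = 1)
    (has : s ≤ N → 1 < a s)
    (ha_mono : ∀ i j, s ≤ i → i ≤ j → j ≤ N → a i ≤ a j)
    (hkN : k ≤ N + 1)
    (hd2 : ∀ i, 1 ≤ i → i ≤ k → 2 ≤ d i)
    (hda : ∀ i, 1 ≤ i → i ≤ k → a (N - k + i) < d i)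
    (hsum1 : ∑ j ∈ Finset.Icc s N, a j ≤ ∑ i ∈ Finset.Icc 1 k, d i)
    (hsum2 : ∑ i ∈ Finset.Icc 1 k, d i < ∑ j ∈ Finset.Icc s N, a j + s)
    (m : ℕ) (hm : 1 ≤ m) :
    ∑ j ∈ Finset.Icc 0 N, (a j : ℤ) ^ (m + 1) - ∑ i ∈ Finset.Icc 1 k, (d i : ℤ) ^ (m + 1) <
      ∑ j ∈ Finset.Icc 0 N, (a j : ℤ) ^ m - ∑ i ∈ Finset.Icc 1 k, (d i : ℤ) ^ m := by
  obtain ⟨n, rfl⟩ : ∃ n, m = n + 1 := ⟨m - 1, by omega⟩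
  -- `p` is the number of leftover weights; the paired ones are `a p, …, a N`.
  obtain ⟨p, hp⟩ : ∃ p, p + k = N + 1 := ⟨N + 1 - k, by omega⟩
  have hpair : ∀ i < k, a (p + i) < d (1 + i) := by
    intro i hi
    rcases Nat.eq_zero_or_pos p with h0 | h0
    · -- Here `k = N + 1` and `N - k` truncates to `0`, so `hda` bounds `a i` by `d i`
      -- rather than `a (i - 1)`; monotonicity of `d` restores the intended inequality.
      subst h0
      rcases Nat.eq_zero_or_pos i with h | h
      · subst h
        have := hd2 1 le_rfl hk
        have := ha1 0 hs
        simp only [Nat.add_zero]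
        omega
      · have h1 := hda i h hi.le
        have h2 := hd_mono i (1 + i) h (by omega) (by omega)
        rw [show N - k + i = 0 + i by omega] at h1
        omega
    · have h1 := hda (1 + i) (by omega) (by omega)
      rwa [show N - k + (1 + i) = p + i by omega] at h1
  have hge : ∀ j ≤ N, (1 : ℤ) ≤ a j := fun j hj => by exact_mod_cast ha_pos j hj
  have hd_sum : ∀ g : ℕ → ℤ,
      ∑ i ∈ Finset.Icc 1 k, g (d i) = ∑ i ∈ Finset.range k, g (d (1 + i)) := by
    intro g
    rw [← Finset.Ico_add_one_right_eq_Icc, Finset.sum_Ico_eq_sum_range]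
    simp
  have ha_sum : ∀ g : ℕ → ℤ, ∑ j ∈ Finset.Icc 0 N, g (a j) =
      ∑ j ∈ Finset.range p, g (a j) + ∑ i ∈ Finset.range k, g (a (p + i)) := by
    intro g
    rw [← Finset.Ico_add_one_right_eq_Icc, ← Finset.range_eq_Ico, ← hp, Finset.sum_range_add]
  suffices hmain : ∑ j ∈ Finset.range p, (a j : ℤ) ^ (n + 1) * ((a j : ℤ) - 1) <
      ∑ i ∈ Finset.range k, (d (1 + i) : ℤ) ^ (n + 1) * ((d (1 + i) : ℤ) - 1) -
        ∑ i ∈ Finset.range k, (a (p + i) : ℤ) ^ (n + 1) * ((a (p + i) : ℤ) - 1) by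
    have ea := ha_sum (fun x => (x : ℤ) ^ (n + 1) * ((x : ℤ) - 1))
    have ed := hd_sum (fun x => (x : ℤ) ^ (n + 1) * ((x : ℤ) - 1))
    have hf : ∀ x : ℤ, x ^ (n + 1) * (x - 1) = x ^ (n + 1 + 1) - x ^ (n + 1) := by
      intro x; ring
    simp only [hf, Finset.sum_sub_distrib] at ea ed hmain
    linarith
  have hbd : ∀ i < k, (a (p + i) : ℤ) < d (1 + i) := fun i hi => by exact_mod_cast hpair i hi
  rcases le_or_gt p s with hps | hps
  · have hz : ∑ j ∈ Finset.range p, (a j : ℤ) ^ (n + 1) * ((a j : ℤ) - 1) = 0 := by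
      apply Finset.sum_eq_zero
      intro j hj
      rw [Finset.mem_range] at hj
      simp [ha1 j (by omega)]
    -- With `A = 1` the coefficient `A ^ n * (A - 1)` vanishes.
    have h := sum_gap_lt n k hk 1 (fun i => (a (p + i) : ℤ)) (fun i => (d (1 + i) : ℤ)) le_rfl
      (fun i hi => hge _ (by omega)) hbd
    simp only [sub_self, mul_zero, zero_mul] at h
    rw [hz]
    exact h
  · have hA := hge p (by omega)
    have h := sum_gap_lt n k hk (a p) (fun i => (a (p + i) : ℤ)) (fun i => (d (1 + i) : ℤ)) hA
      (fun i hi => by exact_mod_cast ha_mono p (p + i) hps.le (by omega) (by omega)) hbd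
    refine lt_of_le_of_lt ?_ h
    have hsplit : ∑ j ∈ Finset.range p, (a j : ℤ) ^ (n + 1) * ((a j : ℤ) - 1) =
        ∑ j ∈ Finset.Ico s p, (a j : ℤ) ^ (n + 1) * ((a j : ℤ) - 1) := by
      rw [← Finset.sum_range_add_sum_Ico _ hps.le, Finset.sum_eq_zero, zero_add]
      intro j hj
      rw [Finset.mem_range] at hj
      simp [ha1 j hj]
    have hcost : ∑ j ∈ Finset.Ico s p, (a j : ℤ) ^ (n + 1) * ((a j : ℤ) - 1) ≤
        (a p : ℤ) ^ n * ((a p : ℤ) - 1) * ∑ j ∈ Finset.Ico s p, (a j : ℤ) := by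
      rw [Finset.mul_sum]
      apply Finset.sum_le_sum
      intro j hj
      rw [Finset.mem_Ico] at hj
      exact cost_le n (hge j (by omega))
        (by exact_mod_cast ha_mono j p hj.1 hj.2.le (by omega))
    have hbudget : ∑ j ∈ Finset.Ico s p, (a j : ℤ) ≤
        ∑ i ∈ Finset.range k, (d (1 + i) : ℤ) - ∑ i ∈ Finset.range k, (a (p + i) : ℤ) := by
      have h1 : ∑ j ∈ Finset.Icc s N, (a j : ℤ) ≤ ∑ i ∈ Finset.Icc 1 k, (d i : ℤ) := by
        exact_mod_cast hsum1
      rw [hd_sum (fun x => (x : ℤ)), ← Finset.Ico_add_one_right_eq_Icc,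
        ← Finset.sum_Ico_consecutive _ hps.le (by omega : p ≤ N + 1),
        Finset.sum_Ico_eq_sum_range _ p, show N + 1 - p = k by omega] at h1
      linarith
    rw [hsplit]
    refine hcost.trans (mul_le_mul_of_nonneg_left hbudget ?_)
    exact mul_nonneg (pow_nonneg (by linarith) n) (by linarith)
end

section
/- Let N, k, s be positive integers, a_0, a_1, …, a_N positive rational numbers and d_1, …, d_k positive integers satisfying: N − k ≥ 2; a_j = 1 for 0 ≤ j ≤ s−1; 1 < a_s ≤ a_{s+1} ≤ … ≤ a_{N−1} ≤ a_N; a_N ≥ 2; d_k ≥ 2·a_N; d_i > a_{N−k+i} for all 1 ≤ i ≤ k−1; and 1 ≤ #{j : a_j ≠ 1} ≤ k (equivalently, s ≤ N and N − s + 1 ≤ k). Then for l = ⌈log₃(N−k+2)⌉ one has Σ_{i=1}^{k} d_i^l ≥ Σ_{j=0}^{N} a_j^l. -/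
/-!
Put `m = N - k` and let `n` be the exponent, a natural number `≥ 1` with `m + 2 ≤ 3 ^ n`.
Since `s ≥ m + 1`, the weights `a_0, …, a_m` all equal `1`, so they contribute `m + 1 ≤ 3 ^ n - 1`.
The remaining weights `a_{m+1}, …, a_N` are paired with `d_1, …, d_k`: for `i < k` the pair
satisfies `a_{m+i} ^ n ≤ d_i ^ n`, while the last pair leaves a surplus
`d_k ^ n - a_N ^ n ≥ (2 ^ n - 1) a_N ^ n ≥ (2 ^ n - 1) 2 ^ n`.
The surplus pays for the ones because `3 ^ n + 2 ^ n ≤ 4 ^ n + 1`.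
-/

theorem three_pow_add_two_pow_le (n : ℕ) (hn : 1 ≤ n) :
    (3 : ℝ) ^ n + 2 ^ n ≤ 4 ^ n + 1 := by
  induction n, hn using Nat.le_induction with
  | base => norm_num
  | succ n _ ih =>
    have h2 : (1 : ℝ) ≤ 2 ^ n := one_le_pow₀ (by norm_num)
    have h3 : (1 : ℝ) ≤ 3 ^ n := one_le_pow₀ (by norm_num)
    rw [pow_succ, pow_succ, pow_succ]
    linarith

/-- The exponent `⌈log₃ (m + 2)⌉` is a positive natural number `n` with `m + 2 ≤ 3 ^ n`. -/
theorem exists_nat_eq_ceil_logb (m : ℕ) :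
    ∃ n : ℕ, 1 ≤ n ∧ ⌈Real.logb 3 ((m : ℝ) + 2)⌉ = (n : ℤ) ∧ (m : ℝ) + 2 ≤ 3 ^ n := by
  have hm : (0 : ℝ) ≤ m := m.cast_nonneg
  have hpos : 0 < ⌈Real.logb 3 ((m : ℝ) + 2)⌉ :=
    Int.ceil_pos.2 (Real.logb_pos (by norm_num) (by linarith))
  obtain ⟨n, hn⟩ := Int.eq_ofNat_of_zero_le hpos.le
  refine ⟨n, by omega, hn, ?_⟩
  have h := Int.le_ceil (Real.logb 3 ((m : ℝ) + 2))
  rw [hn, Int.cast_natCast, Real.logb_le_iff_le_rpow (by norm_num) (by linarith),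
    Real.rpow_natCast] at h
  exact h

/-- The surplus of the last pair: if `2 ≤ x` and `2 x ≤ y`, then `y ^ n - x ^ n ≥ 3 ^ n - 1`. -/
theorem three_pow_add_pow_le (n : ℕ) (hn : 1 ≤ n) (x y : ℝ) (hx : 2 ≤ x) (hy : 2 * x ≤ y) :
    (3 : ℝ) ^ n + x ^ n ≤ y ^ n + 1 := by
  have h1 : (2 : ℝ) ^ n ≤ x ^ n := by gcongr
  have h2 : (2 : ℝ) ^ n * x ^ n ≤ y ^ n := by
    rw [← mul_pow]
    gcongr
  have h3 : (1 : ℝ) ≤ 2 ^ n := one_le_pow₀ (by norm_num)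
  have h4 : (4 : ℝ) ^ n = 2 ^ n * 2 ^ n := by
    rw [← mul_pow]
    norm_num
  have h5 := three_pow_add_two_pow_le n hn
  nlinarith [mul_nonneg (sub_nonneg.2 h3) (sub_nonneg.2 h1)]

/-- Lemma on sums of `l`-th powers: if `N − k ≥ 2`, the weights `a_j` are positive
rationals with the first `s` equal to `1` and the rest forming a nondecreasing chain
`1 < a_s ≤ … ≤ a_N` with `a_N ≥ 2`, the degrees satisfy `d_k ≥ 2·a_N` and
`d_i > a_{N−k+i}` for `1 ≤ i ≤ k−1`, and `1 ≤ #{j : a_j ≠ 1} ≤ k` (i.e. `s ≤ N` and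
`N − s + 1 ≤ k`), then for `l = ⌈log₃(N−k+2)⌉` one has `Σ d_i^l ≥ Σ a_j^l`. -/
theorem stmt8 (N k s : ℕ) (a : ℕ → ℚ) (d : ℕ → ℕ)
    (hN : 0 < N) (hk : 0 < k) (hs : 0 < s)
    (hNk : k + 2 ≤ N)
    (ha_pos : ∀ j, j ≤ N → 0 < a j)
    (ha1 : ∀ j, j < s → a j = 1)
    (has : 1 < a s)
    (ha_mono : ∀ i j, s ≤ i → i ≤ j → j ≤ N → a i ≤ a j)
    (haN : 2 ≤ a N)
    (hd_pos : ∀ i, 1 ≤ i → i ≤ k → 0 < d i)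
    (hdk : 2 * a N ≤ (d k : ℚ))
    (hda : ∀ i, 1 ≤ i → i ≤ k - 1 → a (N - k + i) < (d i : ℚ))
    (hsN : s ≤ N) (hks : N - s + 1 ≤ k) :
    ∑ j ∈ Finset.Icc 0 N, (a j : ℝ) ^ ((⌈Real.logb 3 ((N : ℝ) - k + 2)⌉ : ℤ) : ℝ) ≤
      ∑ i ∈ Finset.Icc 1 k, (d i : ℝ) ^ ((⌈Real.logb 3 ((N : ℝ) - k + 2)⌉ : ℤ) : ℝ) := by
  obtain ⟨t, rfl⟩ : ∃ t, k = t + 1 := ⟨k - 1, by omega⟩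
  obtain ⟨m, rfl⟩ : ∃ m, N = m + 1 + t := ⟨N - (t + 1), by omega⟩
  have hcast : (((m + 1 + t : ℕ) : ℝ) - ((t + 1 : ℕ) : ℝ) + 2) = (m : ℝ) + 2 := by
    push_cast
    ring
  obtain ⟨n, hn, hceil, hle⟩ := exists_nat_eq_ceil_logb m
  rw [hcast, hceil]
  simp only [Int.cast_natCast, Real.rpow_natCast]
  have hL : Finset.Icc 0 (m + 1 + t) = Finset.range ((m + 1) + (t + 1)) := by
    ext j
    simp only [Finset.mem_Icc, Finset.mem_range]
    omega
  have hR : ∑ i ∈ Finset.Icc 1 (t + 1), (d i : ℝ) ^ n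
      = ∑ i ∈ Finset.range (t + 1), (d (i + 1) : ℝ) ^ n := by
    rw [Finset.range_eq_Ico, Finset.sum_Ico_add' (fun i => (d i : ℝ) ^ n)]
    rfl
  have hones : ∑ j ∈ Finset.range (m + 1), (a j : ℝ) ^ n = (m : ℝ) + 1 := by
    rw [Finset.sum_congr rfl (g := fun _ => (1 : ℝ))]
    · simp
    · intro j hj
      rw [Finset.mem_range] at hj
      rw [ha1 j (by omega)]
      simp
  have hpairs : ∑ i ∈ Finset.range t, (a (m + 1 + i) : ℝ) ^ n
      ≤ ∑ i ∈ Finset.range t, (d (i + 1) : ℝ) ^ n := by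
    refine Finset.sum_le_sum fun i hi => ?_
    rw [Finset.mem_range] at hi
    have h := hda (i + 1) (by omega) (by omega)
    rw [show m + 1 + t - (t + 1) + (i + 1) = m + 1 + i by omega] at h
    have h0 : (0 : ℝ) ≤ a (m + 1 + i) := by exact_mod_cast (ha_pos (m + 1 + i) (by omega)).le
    have h' : (a (m + 1 + i) : ℝ) ≤ d (i + 1) := by exact_mod_cast h.le
    exact pow_le_pow_left₀ h0 h' n
  have hlast := three_pow_add_pow_le n hn (a (m + 1 + t)) (d (t + 1))
    (by exact_mod_cast haN) (by exact_mod_cast hdk)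
  rw [hL, hR, Finset.sum_range_add, hones, Finset.sum_range_succ, Finset.sum_range_succ]
  linarith
end

section
/- Let d and N be positive integers with N ≥ 3, let s be a positive integer with s ≤ N−1, and let a_0, a_1, …, a_N be positive rational numbers satisfying: a_j = 1 for 0 ≤ j ≤ s−1; 1 < a_s ≤ a_{s+1} ≤ … ≤ a_{N−1} ≤ a_N; every a_j with j ≠ s is an integer; a_N ≥ 3; d ≥ 2·a_N; and d = m·a_0·a_1·…·a_N for some positive integer m. Then for l = ⌈log₃(N+1)⌉ one has d^l ≥ Σ_{j=0}^{N} a_j^l. -/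
/-!
Write `M = a N` and `n = N - s`. The `s` weights equal to `1` contribute `s ≤ N + 1 ≤ 3 ^ l ≤ M ^ l`,
and each of the other `n + 1` weights contributes at most `M ^ l`, so the sum is at most
`(n + 2) * M ^ l`. It remains to find `c` with `c * M ≤ d` and `n + 2 ≤ c ^ l`, where `l ≥ 2`
because `N + 1 > 3`. If `n ≤ 2`, the hypothesis `2 * M ≤ d` gives `c = 2`. If `n ≥ 3`, the `n - 1`
integer weights strictly between positions `s` and `N` are at least `2`, and `c = 2 ^ (n - 1)` works.
-/

/-- The product of the weights is at least `2 ^ (n - 1) * a N`, where `n = N - s`. -/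
theorem two_pow_mul_le_prod (N s : ℕ) (a : ℕ → ℚ) (hsN : s < N)
    (h1 : ∀ j, j ≤ s → 1 ≤ a j) (h2 : ∀ j, s < j → j < N → 2 ≤ a j) (hN : 0 ≤ a N) :
    2 ^ (N - s - 1) * a N ≤ ∏ j ∈ Finset.Icc 0 N, a j := by
  rw [← Nat.range_succ_eq_Icc_zero, Finset.prod_range_succ,
    ← Finset.prod_range_mul_prod_Ico a (Nat.succ_le_of_lt hsN)]
  refine mul_le_mul_of_nonneg_right ?_ hN
  have hA : (1 : ℚ) ≤ ∏ j ∈ Finset.range s.succ, a j := by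
    have := Finset.prod_le_prod (s := Finset.range s.succ) (f := fun _ => (1 : ℚ)) (g := a)
      (fun _ _ => zero_le_one) (fun j hj => h1 j (Nat.lt_succ_iff.mp (Finset.mem_range.mp hj)))
    simpa using this
  have hB : (2 : ℚ) ^ (N - s - 1) ≤ ∏ j ∈ Finset.Ico s.succ N, a j := by
    have := Finset.prod_le_prod (s := Finset.Ico s.succ N) (f := fun _ => (2 : ℚ)) (g := a)
      (fun _ _ => zero_le_two)
      (fun j hj => h2 j (Finset.mem_Ico.mp hj).1 (Finset.mem_Ico.mp hj).2)
    rw [Finset.prod_const, Nat.card_Ico] at this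
    rwa [show N - s - 1 = N - s.succ by omega]
  exact hB.trans (le_mul_of_one_le_left (le_trans (by positivity) hB) hA)

theorem sum_pow_le (N s l : ℕ) (a : ℕ → ℚ) (hsN : s < N) (hl : N + 1 ≤ 3 ^ l) (hN : 3 ≤ a N)
    (h1 : ∀ j, j < s → a j = 1) (h2 : ∀ j, s ≤ j → j ≤ N → 0 ≤ a j ∧ a j ≤ a N) :
    ∑ j ∈ Finset.Icc 0 N, a j ^ l ≤ ((N - s + 2 : ℕ) : ℚ) * a N ^ l := by
  rw [← Nat.range_succ_eq_Icc_zero,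
    ← Finset.sum_range_add_sum_Ico _ (show s ≤ N + 1 by omega)]
  have hA : ∑ j ∈ Finset.range s, a j ^ l = s := by
    rw [Finset.sum_congr rfl (g := fun _ => (1 : ℚ))
      (fun j hj => by rw [h1 j (Finset.mem_range.mp hj), one_pow])]
    simp
  have hB : ∑ j ∈ Finset.Ico s (N + 1), a j ^ l ≤ ((N - s + 1 : ℕ) : ℚ) * a N ^ l := by
    have := Finset.sum_le_card_nsmul (Finset.Ico s (N + 1)) (fun j => a j ^ l) (a N ^ l)
      (fun j hj => by
        have hj' := Finset.mem_Ico.mp hj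
        obtain ⟨h0, h3⟩ := h2 j hj'.1 (by omega)
        exact pow_le_pow_left₀ h0 h3 l)
    rwa [Nat.card_Ico, nsmul_eq_mul, show N + 1 - s = N - s + 1 by omega] at this
  have hC : (s : ℚ) ≤ a N ^ l := by
    have h3 : (s : ℚ) ≤ 3 ^ l := by exact_mod_cast (show s ≤ 3 ^ l by omega)
    exact h3.trans (pow_le_pow_left₀ (by norm_num) hN l)
  rw [hA]
  push_cast at hB ⊢
  linarith

theorem add_two_le_four_pow (n : ℕ) (hn : 3 ≤ n) : n + 2 ≤ 4 ^ (n - 1) := by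
  induction n, hn using Nat.le_induction with
  | base => norm_num
  | succ k hk ih =>
    obtain ⟨i, rfl⟩ : ∃ i, k = i + 1 := ⟨k - 1, by omega⟩
    simp only [Nat.add_sub_cancel] at ih ⊢
    rw [pow_succ]
    omega


/-- If `N ≥ 3`, `s ≤ N − 1`, the positive rational weights satisfy `a_j = 1` for `j < s`,
`1 < a_s ≤ … ≤ a_N`, every `a_j` with `j ≠ s` is an integer, `a_N ≥ 3`, `d ≥ 2·a_N` and
`d = m·a_0·…·a_N` for some positive integer `m`, then for `l = ⌈log₃(N+1)⌉` one has
`d^l ≥ Σ a_j^l`. -/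
theorem stmt9 (d N s : ℕ) (a : ℕ → ℚ)
    (hd : 0 < d) (hN : 3 ≤ N) (hs : 0 < s) (hsN : s ≤ N - 1)
    (ha_pos : ∀ j, j ≤ N → 0 < a j)
    (ha1 : ∀ j, j < s → a j = 1)
    (has : 1 < a s)
    (ha_mono : ∀ i j, s ≤ i → i ≤ j → j ≤ N → a i ≤ a j)
    (ha_int : ∀ j, j ≤ N → j ≠ s → ∃ n : ℤ, a j = n)
    (haN : 3 ≤ a N)
    (hda : 2 * a N ≤ (d : ℚ))
    (hm : ∃ m : ℕ, 0 < m ∧ (d : ℚ) = m * ∏ j ∈ Finset.Icc 0 N, a j) :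
    ∑ j ∈ Finset.Icc 0 N, (a j : ℝ) ^ ((⌈Real.logb 3 ((N : ℝ) + 1)⌉ : ℤ) : ℝ) ≤
      (d : ℝ) ^ ((⌈Real.logb 3 ((N : ℝ) + 1)⌉ : ℤ) : ℝ) := by
  obtain ⟨m, hm0, hm⟩ := hm
  have hsN' : s < N := by omega
  obtain ⟨l, hlc, hl3, hl2⟩ : ∃ l : ℕ, ⌈Real.logb 3 ((N : ℝ) + 1)⌉ = (l : ℤ) ∧
      N + 1 ≤ 3 ^ l ∧ 2 ≤ l := by
    have hN1 : (0 : ℝ) < (N : ℝ) + 1 := by positivity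
    have hNR : (3 : ℝ) ≤ N := by exact_mod_cast hN
    have h1 : 1 < Real.logb 3 ((N : ℝ) + 1) := by
      rw [Real.lt_logb_iff_rpow_lt (by norm_num) hN1, Real.rpow_one]
      linarith
    have h2 : 1 < ⌈Real.logb 3 ((N : ℝ) + 1)⌉ := by
      rw [Int.lt_ceil]
      exact_mod_cast h1
    obtain ⟨l, hl⟩ := Int.eq_ofNat_of_zero_le (show 0 ≤ ⌈Real.logb 3 ((N : ℝ) + 1)⌉ by omega)
    refine ⟨l, hl, ?_, by omega⟩
    have h3 := Int.le_ceil (Real.logb 3 ((N : ℝ) + 1))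
    rw [hl, Real.logb_le_iff_le_rpow (by norm_num) hN1, Int.cast_natCast,
      Real.rpow_natCast] at h3
    exact_mod_cast h3
  rw [hlc, Int.cast_natCast]
  simp only [Real.rpow_natCast]
  suffices h : ∑ j ∈ Finset.Icc 0 N, a j ^ l ≤ (d : ℚ) ^ l by exact_mod_cast h
  have hsum := sum_pow_le N s l a hsN' hl3 haN ha1
    (fun j hj hjN => ⟨(ha_pos j hjN).le, ha_mono j N hj hjN le_rfl⟩)
  have hprod := two_pow_mul_le_prod N s a hsN'
    (fun j hj => by
      rcases hj.lt_or_eq with h | rfl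
      · exact (ha1 j h).ge
      · exact has.le)
    (fun j hj hjN => by
      -- `a j` is an integer with `1 < a s ≤ a j`.
      obtain ⟨z, hz⟩ := ha_int j hjN.le hj.ne'
      have h1 : 1 < a j := has.trans_le (ha_mono s j le_rfl hj.le hjN.le)
      rw [hz] at h1 ⊢
      have h2 : 1 < z := by exact_mod_cast h1
      exact_mod_cast (show 2 ≤ z by omega))
    (by linarith)
  have hdP : 2 ^ (N - s - 1) * a N ≤ (d : ℚ) := by
    rw [hm]
    have hm1 : (1 : ℚ) ≤ m := by exact_mod_cast hm0
    exact hprod.trans (le_mul_of_one_le_left (le_trans (by positivity) hprod) hm1)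
  obtain ⟨c, hcd, hc⟩ : ∃ c : ℕ, (c : ℚ) * a N ≤ d ∧ N - s + 2 ≤ c ^ l := by
    rcases Nat.lt_or_ge (N - s) 3 with hn | hn
    · refine ⟨2, by exact_mod_cast hda, ?_⟩
      have : 2 ^ 2 ≤ 2 ^ l := Nat.pow_le_pow_right (by norm_num) hl2
      omega
    · refine ⟨2 ^ (N - s - 1), by exact_mod_cast hdP, ?_⟩
      calc N - s + 2 ≤ 4 ^ (N - s - 1) := add_two_le_four_pow _ hn
        _ = (2 ^ (N - s - 1)) ^ 2 := by rw [pow_right_comm]; norm_num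
        _ ≤ (2 ^ (N - s - 1)) ^ l := Nat.pow_le_pow_right (by positivity) hl2
  calc ∑ j ∈ Finset.Icc 0 N, a j ^ l ≤ ((N - s + 2 : ℕ) : ℚ) * a N ^ l := hsum
    _ ≤ (c : ℚ) ^ l * a N ^ l :=
        mul_le_mul_of_nonneg_right (by exact_mod_cast hc) (by positivity)
    _ = (c * a N) ^ l := (mul_pow _ _ _).symm
    _ ≤ (d : ℚ) ^ l := pow_le_pow_left₀ (by positivity) hcd l
end

section
/- Let N, k, s be positive integers, d_1, …, d_k positive integers and a_0, a_1, …, a_N positive rational numbers satisfying: N − k ≥ 2; d_1 ≤ d_2 ≤ … ≤ d_k; a_j = 1 for 0 ≤ j ≤ s−1; 1 < a_s ≤ a_{s+1} ≤ … ≤ a_{N−1} and a_{N−2} ≤ a_N (when these indices are at least s); d_i > a_{N−k+i} for all 1 ≤ i ≤ k−1; d_i ≥ 2 for all 1 ≤ i ≤ k; a_N ≥ 3; d_1·…·d_k = m·a_0·…·a_N for some positive integer m; d_k ≥ 2·a_N; and every a_j with j ∉ {s, N−1} is an integer. Then for l = ⌈log₃(N−k+2)⌉ one has Σ_{i=1}^{k}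 d_i^l ≥ Σ_{j=0}^{N} a_j^l. -/
/-!
Put `M = max_{j ≤ N-k} a_j` and pair `d_i` with `b_i = a_{N-k+i}`, so that `M ≤ b_i ≤ d_i` and
`M ≤ a_N`, at least for `k ≥ 2`. The two bounds `1 - 1/t ≤ log t ≤ t - 1` give

* `a_j ^ l ≤ 1 + M ^ l * log (a_j ^ l)` for `j ≤ N - k`,
* `d_i ^ l ≥ b_i ^ l + M ^ l * log ((d_i / b_i) ^ l)` for `i < k`.

Since `∏ d_i ≥ ∏ a_j`, the logarithms on the side of the `d_i` outweigh those on the side of the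
`a_j` once the pair `(d_k, a_N)` is included. For that last pair `t = (d_k / a_N) ^ l ≥ 4`, so
`t - 1 - log t ≥ 1`, and there is a surplus of `a_N ^ l ≥ 3 ^ l ≥ N - k + 2`, which absorbs the
`N - k + 1` ones in the first bound (`sum_pow_le_of_prod_le`).

For `k = 1` it can happen that `a_{N-1} > a_N`; then `a_{N-1}` takes over the role of `a_N`, which
is possible because `d_1 ≥ ∏ a_j ≥ a_{N-1} a_N ≥ 3 a_{N-1}`.
-/

lemma pow_le_one_add_mul_log {x M : ℝ} (l : ℕ) (hx : 1 ≤ x) (hxM : x ≤ M) :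
    x ^ l ≤ 1 + M ^ l * (l * Real.log x) := by
  have h1 : 0 < x ^ l := by positivity
  have h2 := Real.one_sub_inv_le_log_of_pos h1
  rw [Real.log_pow] at h2
  have h3 : x ^ l ≤ M ^ l := by gcongr
  have h4 : 0 ≤ l * Real.log x := by have := Real.log_nonneg hx; positivity
  have h5 : x ^ l * (1 - (x ^ l)⁻¹) = x ^ l - 1 := by field_simp
  nlinarith [mul_le_mul_of_nonneg_left h2 h1.le, mul_le_mul_of_nonneg_right h3 h4]

lemma pow_add_mul_log_le {b d M : ℝ} (l : ℕ) (hM : 1 ≤ M) (hb : M ≤ b) (hd : b ≤ d) :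
    b ^ l + M ^ l * (l * (Real.log d - Real.log b)) ≤ d ^ l := by
  have hb0 : 0 < b := by linarith
  have hd0 : 0 < d := by linarith
  have h2 := Real.log_le_sub_one_of_pos (show 0 < (d / b) ^ l by positivity)
  rw [Real.log_pow, Real.log_div hd0.ne' hb0.ne'] at h2
  have h3 : M ^ l ≤ b ^ l := by gcongr
  have h4 : 0 ≤ l * (Real.log d - Real.log b) := by
    have := Real.log_le_log hb0 hd
    exact mul_nonneg (by positivity) (by linarith)
  have h5 : b ^ l * ((d / b) ^ l - 1) = d ^ l - b ^ l := by
    rw [div_pow]; field_simp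
  nlinarith [mul_le_mul_of_nonneg_left h2 (show 0 ≤ b ^ l by positivity),
    mul_le_mul_of_nonneg_right h3 h4]

/-- Doubling the base leaves room for an extra `3 ^ l` in `pow_add_mul_log_le`. -/
lemma pow_add_three_pow_add_mul_log_le {B D M : ℝ} (l : ℕ) (hl : 2 ≤ l) (hM : 1 ≤ M)
    (hB : M ≤ B) (hB3 : 3 ≤ B) (hD : 2 * B ≤ D) :
    B ^ l + 3 ^ l + M ^ l * (l * (Real.log D - Real.log B)) ≤ D ^ l := by
  have hB0 : 0 < B := by linarith
  have hD0 : 0 < D := by linarith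
  have hr : 2 ≤ D / B := by rwa [le_div_iff₀ hB0]
  have ht : 4 ≤ (D / B) ^ l := by
    calc (4 : ℝ) = 2 ^ 2 := by norm_num
      _ ≤ 2 ^ l := by gcongr; norm_num
      _ ≤ _ := by gcongr
  have hlog : Real.log ((D / B) ^ l) ≤ (D / B) ^ l - 2 := by
    -- the tangent line of `log` at `4`
    have h := Real.log_le_sub_one_of_pos (show 0 < (D / B) ^ l / 4 by positivity)
    rw [Real.log_div (by positivity) (by norm_num)] at h
    have h4 : Real.log 4 = 2 * Real.log 2 := by
      rw [show (4 : ℝ) = 2 ^ 2 by norm_num, Real.log_pow]; norm_num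
    have := Real.log_two_lt_d9
    linarith
  rw [Real.log_pow, Real.log_div hD0.ne' hB0.ne'] at hlog
  have h3 : M ^ l ≤ B ^ l := by gcongr
  have h3' : (3 : ℝ) ^ l ≤ B ^ l := by gcongr
  have h4 : 0 ≤ l * (Real.log D - Real.log B) := by
    have := Real.log_le_log hB0 (show B ≤ D by linarith)
    exact mul_nonneg (by positivity) (by linarith)
  have h5 : B ^ l * ((D / B) ^ l - 2) = D ^ l - 2 * B ^ l := by
    rw [div_pow]; field_simp
  nlinarith [mul_le_mul_of_nonneg_left hlog (show 0 ≤ B ^ l by positivity),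
    mul_le_mul_of_nonneg_right h3 h4]

/-- The comparison of power sums behind the theorem: `x` lists the unpaired weights, `(b i, d i)`
and `(B, D)` are the pairs, and `M` separates the `x j` from the paired weights. -/
lemma sum_pow_le_of_prod_le (J I : Finset ℕ) (x b d : ℕ → ℝ) (B D M : ℝ) (l : ℕ) (hl : 2 ≤ l)
    (hM : 1 ≤ M) (hx : ∀ j ∈ J, 1 ≤ x j ∧ x j ≤ M) (hb : ∀ i ∈ I, M ≤ b i ∧ b i ≤ d i)
    (hB : M ≤ B) (hB3 : 3 ≤ B) (hD : 2 * B ≤ D)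
    (hprod : (∏ j ∈ J, x j) * (∏ i ∈ I, b i) * B ≤ (∏ i ∈ I, d i) * D)
    (hJ : (J.card : ℝ) ≤ 3 ^ l) :
    ∑ j ∈ J, x j ^ l + ∑ i ∈ I, b i ^ l + B ^ l ≤ ∑ i ∈ I, d i ^ l + D ^ l := by
  have hx0 : ∀ j ∈ J, 0 < x j := fun j hj => by linarith [(hx j hj).1]
  have hb0 : ∀ i ∈ I, 0 < b i := fun i hi => by linarith [(hb i hi).1]
  have hd0 : ∀ i ∈ I, 0 < d i := fun i hi => by linarith [(hb i hi).2, hb0 i hi]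
  have hB0 : 0 < B := by linarith
  have hD0 : 0 < D := by linarith
  have pX := Finset.prod_pos hx0
  have pb := Finset.prod_pos hb0
  have pd := Finset.prod_pos hd0
  have hlog := Real.log_le_log (by positivity) hprod
  rw [Real.log_mul (by positivity) hB0.ne', Real.log_mul pX.ne' pb.ne',
    Real.log_mul pd.ne' hD0.ne', Real.log_prod (fun j hj => (hx0 j hj).ne'),
    Real.log_prod (fun j hj => (hb0 j hj).ne'), Real.log_prod (fun j hj => (hd0 j hj).ne')] at hlog
  have e1 := Finset.sum_le_sum fun j hj => pow_le_one_add_mul_log l (hx j hj).1 (hx j hj).2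
  have e2 := Finset.sum_le_sum fun i hi => pow_add_mul_log_le l hM (hb i hi).1 (hb i hi).2
  have e3 := pow_add_three_pow_add_mul_log_le l hl hM hB hB3 hD
  rw [Finset.sum_add_distrib, ← Finset.mul_sum, ← Finset.mul_sum] at e1 e2
  rw [Finset.sum_sub_distrib] at e2
  simp only [Finset.sum_const, nsmul_eq_mul, mul_one] at e1
  have hMl : 0 ≤ M ^ l * l := by positivity
  nlinarith [mul_le_mul_of_nonneg_left hlog hMl]

/-- Main inequality lemma: under the stated conditions on the positive integers
`d₁ ≤ … ≤ d_k` and positive rationals `a₀, …, a_N`, for `l = ⌈log₃(N−k+2)⌉` one has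
`Σ d_i^l ≥ Σ a_j^l`. -/
theorem stmt10 (N k s : ℕ) (d : ℕ → ℕ) (a : ℕ → ℚ)
    (hN : 0 < N) (hk : 0 < k) (hs : 0 < s)
    (hNk : k + 2 ≤ N)
    (hd_pos : ∀ i, 1 ≤ i → i ≤ k → 0 < d i)
    (hd_mono : ∀ i j, 1 ≤ i → i ≤ j → j ≤ k → d i ≤ d j)
    (ha_pos : ∀ j, j ≤ N → 0 < a j)
    (ha1 : ∀ j, j < s → a j = 1)
    (has : s ≤ N - 1 → 1 < a s)
    (ha_mono : ∀ i j, s ≤ i → i ≤ j → j ≤ N - 1 → a i ≤ a j)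
    (haN2 : s ≤ N - 2 → a (N - 2) ≤ a N)
    (hda : ∀ i, 1 ≤ i → i ≤ k - 1 → a (N - k + i) < (d i : ℚ))
    (hd2 : ∀ i, 1 ≤ i → i ≤ k → 2 ≤ d i)
    (haN : 3 ≤ a N)
    (hm : ∃ m : ℕ, 0 < m ∧
      (∏ i ∈ Finset.Icc 1 k, (d i : ℚ)) = m * ∏ j ∈ Finset.Icc 0 N, a j)
    (hdk : 2 * a N ≤ (d k : ℚ))
    (ha_int : ∀ j, j ≤ N → j ≠ s → j ≠ N - 1 → ∃ n : ℤ, a j = n) :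
    ∑ j ∈ Finset.Icc 0 N, (a j : ℝ) ^ ((⌈Real.logb 3 ((N : ℝ) - k + 2)⌉ : ℤ) : ℝ) ≤
      ∑ i ∈ Finset.Icc 1 k, (d i : ℝ) ^ ((⌈Real.logb 3 ((N : ℝ) - k + 2)⌉ : ℤ) : ℝ) := by
  have hsN : s ≤ N := by
    by_contra h
    have := ha1 N (by omega)
    linarith
  have hge : ∀ j, j ≤ N → 1 ≤ a j := by
    intro j hj
    rcases lt_or_ge j s with h | h
    · exact (ha1 j h).ge
    rcases eq_or_lt_of_le hj with rfl | h'
    · linarith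
    · exact (has (by omega)).le.trans (ha_mono s j le_rfl h (by omega))
  have hmono : ∀ i j, i ≤ j → j ≤ N - 1 → a i ≤ a j := by
    intro i j hij hj
    rcases lt_or_ge i s with h | h
    · rw [ha1 i h]; exact hge j (by omega)
    · exact ha_mono i j h hij hj
  have hN2 : a (N - 2) ≤ a N := by
    rcases lt_or_ge (N - 2) s with h | h
    · rw [ha1 _ h]; linarith
    · exact haN2 h
  have hprod : ∏ j ∈ Finset.Icc 0 N, (a j : ℝ) ≤ ∏ i ∈ Finset.Icc 1 k, (d i : ℝ) := by
    obtain ⟨m, hm0, hm⟩ := hm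
    have hP : (0 : ℚ) < ∏ j ∈ Finset.Icc 0 N, a j :=
      Finset.prod_pos fun j hj => ha_pos j (Finset.mem_Icc.1 hj).2
    have hm1 : (1 : ℚ) ≤ m := by exact_mod_cast hm0
    have : ∏ j ∈ Finset.Icc 0 N, a j ≤ ∏ i ∈ Finset.Icc 1 k, (d i : ℚ) := by
      rw [hm]; nlinarith
    exact_mod_cast this
  obtain ⟨n, rfl⟩ : ∃ n, N = n + k := ⟨N - k, by omega⟩
  have hn : 2 ≤ n := by omega
  have hcast : ((n + k : ℕ) : ℝ) - k + 2 = n + 2 := by push_cast; ring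
  rw [hcast]
  obtain ⟨l, hl⟩ : ∃ l : ℕ, ⌈Real.logb 3 ((n : ℝ) + 2)⌉ = (l : ℤ) :=
    ⟨_, (Int.toNat_of_nonneg (Int.ceil_nonneg
      (Real.logb_nonneg (by norm_num) (by linarith [(n.cast_nonneg : (0 : ℝ) ≤ n)])))).symm⟩
  have hnl : (n : ℝ) + 2 ≤ 3 ^ l := by
    have h : Real.logb 3 ((n : ℝ) + 2) ≤ (l : ℝ) := by
      have := Int.le_ceil (Real.logb 3 ((n : ℝ) + 2))
      rw [hl] at this
      exact_mod_cast this
    rw [Real.logb_le_iff_le_rpow (by norm_num) (by positivity)] at h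
    rwa [Real.rpow_natCast] at h
  have hl2 : 2 ≤ l := by
    have h4 : (2 : ℝ) ≤ n := by exact_mod_cast hn
    by_contra h
    interval_cases l <;> norm_num at hnl <;> linarith
  simp only [hl, Int.cast_natCast, Real.rpow_natCast]
  obtain ⟨q, rfl⟩ : ∃ q, k = q + 1 := ⟨k - 1, by omega⟩
  have hgeR : ∀ j, j ≤ n + (q + 1) → (1 : ℝ) ≤ a j := fun j hj => by exact_mod_cast hge j hj
  have hmonoR : ∀ i j, i ≤ j → j ≤ n + q → (a i : ℝ) ≤ a j := fun i j h h' => by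
    exact_mod_cast hmono i j h (by omega)
  have haNR : (3 : ℝ) ≤ a (n + (q + 1)) := by exact_mod_cast haN
  have hdkR : 2 * (a (n + (q + 1)) : ℝ) ≤ d (q + 1) := by exact_mod_cast hdk
  have hI1 : Finset.Icc 1 (q + 1) = Finset.Ico 1 (q + 1 + 1) := by
    ext
    simp only [Finset.mem_Icc, Finset.mem_Ico]
    omega
  have splitd : ∀ f : ℕ → ℝ, ∑ i ∈ Finset.Icc 1 (q + 1), f i =
      ∑ i ∈ Finset.range q, f (i + 1) + f (q + 1) := fun f => by
    rw [hI1, Finset.sum_Ico_eq_sum_range, Nat.add_sub_cancel, Finset.sum_range_succ]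
    simp [add_comm]
  have splitd' : ∀ f : ℕ → ℝ, ∏ i ∈ Finset.Icc 1 (q + 1), f i =
      (∏ i ∈ Finset.range q, f (i + 1)) * f (q + 1) := fun f => by
    rw [hI1, Finset.prod_Ico_eq_prod_range, Nat.add_sub_cancel, Finset.prod_range_succ]
    simp [add_comm]
  have hI : Finset.Icc 0 (n + (q + 1)) = Finset.range ((n + 1 + q) + 1) := by
    ext; simp; omega
  have eN : n + 1 + q = n + (q + 1) := by omega
  rw [hI, splitd'] at hprod
  rw [hI, splitd]
  by_cases hc : a n ≤ a (n + (q + 1))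
  · rw [Finset.prod_range_succ, Finset.prod_range_add, eN] at hprod
    rw [Finset.sum_range_succ, Finset.sum_range_add, eN]
    refine sum_pow_le_of_prod_le (Finset.range (n + 1)) (Finset.range q) (fun j => (a j : ℝ))
      (fun i => (a (n + 1 + i) : ℝ)) (fun i => (d (i + 1) : ℝ)) _ _ (a n : ℝ) l hl2
      (hgeR n (by omega)) ?_ ?_ (by exact_mod_cast hc) haNR hdkR hprod ?_
    · intro j hj
      rw [Finset.mem_range] at hj
      exact ⟨hgeR j (by omega), hmonoR j n (by omega) (by omega)⟩
    · intro i hi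
      rw [Finset.mem_range] at hi
      refine ⟨hmonoR n _ (by omega) (by omega), ?_⟩
      have h := hda (i + 1) (by omega) (by omega)
      rw [show n + (q + 1) - (q + 1) + (i + 1) = n + 1 + i by omega] at h
      exact_mod_cast h.le
    · simp; linarith
  · -- only `k = 1` is possible here, and `a (N - 1)` is the largest weight
    obtain rfl : q = 0 := by
      by_contra hq
      exact hc ((hmono n _ (by omega) (by omega)).trans hN2)
    have hc' : (a (n + 1) : ℝ) ≤ a n := by exact_mod_cast (not_le.1 hc).le
    have haN' : (3 : ℝ) ≤ a (n + 1) := haNR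
    simp only [Finset.range_zero, Finset.prod_empty, Finset.sum_empty, add_zero, zero_add,
      one_mul] at hprod ⊢
    have hQ : (1 : ℝ) ≤ ∏ j ∈ Finset.range n, (a j : ℝ) := by
      refine Finset.one_le_prod fun j hj => hgeR j ?_
      rw [Finset.mem_range] at hj; omega
    have hJ : Finset.range (n + 1 + 1) = insert n (insert (n + 1) (Finset.range n)) := by
      ext; simp; omega
    have key := sum_pow_le_of_prod_le (insert (n + 1) (Finset.range n)) ∅ (fun j => (a j : ℝ))
      (fun _ => 0) (fun _ => 0) (a n : ℝ) (d 1 : ℝ) (a n : ℝ) l hl2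
      (hgeR n (by omega)) ?_ (by simp) le_rfl (haN'.trans hc') ?_ ?_ ?_
    · rw [hJ, Finset.sum_insert (by simp)]
      simp only [Finset.sum_empty, add_zero, zero_add] at key
      linarith
    · intro j hj
      rw [Finset.mem_insert, Finset.mem_range] at hj
      rcases hj with rfl | hj
      · exact ⟨by linarith, hc'⟩
      · exact ⟨hgeR j (by omega), hmonoR j n (by omega) (by omega)⟩
    · rw [Finset.prod_range_succ, Finset.prod_range_succ] at hprod
      have h1 : (0 : ℝ) < a n := by linarith
      have h2 : 3 * (a n : ℝ) ≤ a n * a (n + 1) := by nlinarith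
      have h3 : (a n : ℝ) * a (n + 1) ≤
          (∏ j ∈ Finset.range n, (a j : ℝ)) * (a n * a (n + 1)) :=
        le_mul_of_one_le_left (by nlinarith) hQ
      linarith
    · rw [hJ, Finset.prod_insert (by simp)] at hprod
      simp only [Finset.prod_empty, mul_one, one_mul]
      linarith
    · rw [Finset.card_insert_of_notMem (by simp)]
      simp; linarith
end

section
/- Let N and k be positive integers with N ≥ k, and let d_1 ≤ d_2 ≤ … ≤ d_k and a_0 ≤ a_1 ≤ … ≤ a_N be positive integers such that: a_j = 1 for all 0 ≤ j ≤ k (i.e., at least k+1 of the a_j equal 1); d_i ≥ 2 for all 1 ≤ i ≤ k; and d_k ≥ 2·a_N. Let l be the real number with 2^l = N − k + 2, i.e., l = log₂(N−k+2). Then Σ_{i=1}^{k} d_i^l ≥ Σ_{j=0}^{N} a_j^l. -/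
/-!
Write `m = N - k` and `l = log₂ (m + 2)`, so that `2 ^ l = m + 2`, and put `A = a_N ^ l ≥ 1`.
The `k + 1` weights with index at most `k` contribute `k + 1`, and each of the remaining `m`
contributes at most `A`. On the other side, `d_k ^ l ≥ (2 a_N) ^ l = (m + 2) A`, and each of the
other `k - 1` degrees contributes at least `2 ^ l = m + 2`. The claim is therefore implied by
`(k + 1) + m A ≤ (k - 1) (m + 2) + (m + 2) A`, which holds because the difference of the two sides
is `(k - 1) (m + 2) + 2 A - (k + 1) ≥ 2 (k - 1) + 2 - (k + 1) = k - 1 ≥ 0`.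
-/

/-- If `N ≥ k ≥ 1`, the positive integer weights `a₀ ≤ … ≤ a_N` satisfy `a_j = 1` for
`0 ≤ j ≤ k`, the degrees `d₁ ≤ … ≤ d_k` satisfy `d_i ≥ 2` and `d_k ≥ 2·a_N`, then for
`l = log₂(N − k + 2)` one has `Σ d_i^l ≥ Σ a_j^l`. -/
theorem stmt11 (N k : ℕ) (d a : ℕ → ℕ)
    (hk : 0 < k) (hkN : k ≤ N)
    (hd_mono : ∀ i j, 1 ≤ i → i ≤ j → j ≤ k → d i ≤ d j)
    (ha_pos : ∀ j, j ≤ N → 0 < a j)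
    (ha_mono : ∀ i j, i ≤ j → j ≤ N → a i ≤ a j)
    (ha1 : ∀ j, j ≤ k → a j = 1)
    (hd2 : ∀ i, 1 ≤ i → i ≤ k → 2 ≤ d i)
    (hdk : 2 * a N ≤ d k) :
    ∑ j ∈ Finset.Icc 0 N, (a j : ℝ) ^ Real.logb 2 ((N : ℝ) - k + 2) ≤
      ∑ i ∈ Finset.Icc 1 k, (d i : ℝ) ^ Real.logb 2 ((N : ℝ) - k + 2) := by
  obtain ⟨m, rfl⟩ := Nat.exists_eq_add_of_le hkN
  obtain ⟨n, rfl⟩ := Nat.exists_eq_add_of_le' hk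
  have hbase : (((n + 1 + m : ℕ) : ℝ) - ((n + 1 : ℕ) : ℝ) + 2) = (m : ℝ) + 2 := by
    push_cast; ring
  rw [hbase]
  have hm0 : (0 : ℝ) ≤ m := Nat.cast_nonneg m
  have hn0 : (0 : ℝ) ≤ n := Nat.cast_nonneg n
  have hl0 : 0 ≤ Real.logb 2 ((m : ℝ) + 2) :=
    Real.logb_nonneg (by norm_num) (by linarith)
  have h2l : (2 : ℝ) ^ Real.logb 2 ((m : ℝ) + 2) = m + 2 :=
    Real.rpow_logb (by norm_num) (by norm_num) (by linarith)
  generalize Real.logb 2 ((m : ℝ) + 2) = l at hl0 h2l ⊢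
  have hA : (1 : ℝ) ≤ (a (n + 1 + m) : ℝ) ^ l :=
    Real.one_le_rpow (by exact_mod_cast ha_pos _ le_rfl) hl0
  have hweights : ∑ j ∈ Finset.Icc 0 (n + 1 + m), (a j : ℝ) ^ l ≤
      (n + 2) + m * (a (n + 1 + m) : ℝ) ^ l := by
    have hset : Finset.Icc 0 (n + 1 + m) = Finset.range ((n + 2) + m) := by
      ext j; simp only [Finset.mem_Icc, Finset.mem_range]; omega
    rw [hset, Finset.sum_range_add]
    refine add_le_add (le_of_eq ?_) ?_
    · rw [Finset.sum_congr rfl (g := fun _ => (1 : ℝ))]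
      · simp
      · intro j hj
        rw [ha1 j (by have := Finset.mem_range.1 hj; omega)]
        simp
    · refine (Finset.sum_le_card_nsmul _ _ ((a (n + 1 + m) : ℝ) ^ l) ?_).trans (by simp)
      intro j hj
      have hj' := Finset.mem_range.1 hj
      exact Real.rpow_le_rpow (Nat.cast_nonneg _)
        (by exact_mod_cast ha_mono _ _ (by omega) le_rfl) hl0
  have hdegrees : n * ((m : ℝ) + 2) + (m + 2) * (a (n + 1 + m) : ℝ) ^ l ≤
      ∑ i ∈ Finset.Icc 1 (n + 1), (d i : ℝ) ^ l := by
    rw [Finset.sum_Icc_succ_top (by omega)]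
    refine add_le_add ?_ ?_
    · refine le_trans (by simp [mul_add]) (Finset.card_nsmul_le_sum _ _ ((m : ℝ) + 2) ?_)
      intro i hi
      have hi' := Finset.mem_Icc.1 hi
      rw [← h2l]
      exact Real.rpow_le_rpow (by norm_num)
        (by exact_mod_cast hd2 i hi'.1 (by omega)) hl0
    · rw [← h2l, ← Real.mul_rpow (by norm_num) (Nat.cast_nonneg _)]
      exact Real.rpow_le_rpow (by positivity) (by exact_mod_cast hdk) hl0
  nlinarith [mul_nonneg hn0 hm0]
end

section
/- Let a_0 ≤ a_1 ≤ … ≤ a_N and d_1 ≤ d_2 ≤ … ≤ d_k be positive integers (with k ≥ 1) such that: d_i ≥ 2 for all 1 ≤ i ≤ k; d_i ≠ a_j for all i and j; and for every integer b > 1 the number of indices j with b dividing a_j is at most the number of indices i with b dividing d_i. Then d_k ≥ 2·a_N. -/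
/-!
If `a N > 1`, the divisibility hypothesis with `b = a N` gives at least one degree `d i` divisible
by `a N`, because `a N` divides itself. Since `d i` differs from `a N`, it is a multiple with
cofactor at least `2`, so `2 * a N ≤ d i ≤ d k`. If `a N ≤ 1`, the bound follows from `2 ≤ d k`.
-/


/-- If `a₀ ≤ … ≤ a_N` and `d₁ ≤ … ≤ d_k` are positive integers with `k ≥ 1`, all
`d_i ≥ 2`, `d_i ≠ a_j` for all `i, j`, and for every integer `b > 1` the number of
weights divisible by `b` is at most the number of degrees divisible by `b`,
then `d_k ≥ 2·a_N`. -/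
theorem stmt15 (N k : ℕ) (a d : ℕ → ℕ) (hk : 0 < k)
    (ha_pos : ∀ j, j ≤ N → 0 < a j)
    (ha_mono : ∀ i j, i ≤ j → j ≤ N → a i ≤ a j)
    (hd_pos : ∀ i, 1 ≤ i → i ≤ k → 0 < d i)
    (hd_mono : ∀ i j, 1 ≤ i → i ≤ j → j ≤ k → d i ≤ d j)
    (hd2 : ∀ i, 1 ≤ i → i ≤ k → 2 ≤ d i)
    (hne : ∀ i j, 1 ≤ i → i ≤ k → j ≤ N → d i ≠ a j)
    (hdiv : ∀ b : ℕ, 1 < b →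
      ((Finset.Icc 0 N).filter (fun j => b ∣ a j)).card ≤
        ((Finset.Icc 1 k).filter (fun i => b ∣ d i)).card) :
    2 * a N ≤ d k := by
  -- For `a N = 1` the claim is just `2 ≤ d k`; otherwise `b = a N` is an admissible divisor.
  rcases Nat.lt_or_ge 1 (a N) with h1 | h1
  · have hcard := hdiv (a N) h1
    have hpos : 0 < ((Finset.Icc 0 N).filter (fun j => a N ∣ a j)).card :=
      Finset.card_pos.mpr ⟨N, by simp⟩
    obtain ⟨i, hi⟩ := Finset.card_pos.mp (hpos.trans_le hcard)
    simp only [Finset.mem_filter, Finset.mem_Icc] at hi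
    obtain ⟨⟨hi1, hik⟩, c, hc⟩ := hi
    refine le_trans ?_ (hd_mono i k hi1 hik le_rfl)
    -- `d i` is a positive multiple of `a N` other than `a N`, so the cofactor is at least `2`.
    have hc2 : 2 ≤ c := by
      have h0 : c ≠ 0 := by
        rintro rfl
        have := hd_pos i hi1 hik
        simp [hc] at this
      have h1' : c ≠ 1 := by
        rintro rfl
        exact hne i N hi1 hik le_rfl (by simpa using hc)
      omega
    rw [hc, mul_comm]
    exact Nat.mul_le_mul_left _ hc2
  · have := hd2 k hk le_rfl
    omega
end

section
/- Let a_0, a_1, …, a_N and d_1, d_2, …, d_k be positive integers such that for every integer b > 1 the number of indices j ∈ {0, …, N} with b dividing a_j is at most the number of indices i ∈ {1, …, k} with b dividing d_i. Then the product a_0·a_1·…·a_N divides the product d_1·d_2·…·d_k. -/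
/-! For a prime `p`, the exponent of `p` in a positive integer `n` is the number of `e ≥ 1` with
`p ^ e ∣ n`. Summing over the factors of a product and exchanging the order of summation
(`factorization_prod_eq_sum_card`), the exponent of `p` in a product is the sum over `e ≥ 1` of the
number of factors divisible by `p ^ e`. The hypothesis at `b = p ^ e` compares these sums term by
term, so each prime has at most the same exponent in `∏ a j` as in `∏ d i`. -/

/-- The exponent of `p` in a product, counted by layers: the `e`-th layer consists of the factors
divisible by `p ^ e`. Any `B` with all factors below `p ^ B` truncates the sum harmlessly. -/
theorem factorization_prod_eq_sum_card {ι : Type*} {p : ℕ} (hp : p.Prime) (S : Finset ι)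
    (f : ι → ℕ) (B : ℕ) (hpos : ∀ x ∈ S, 0 < f x) (hB : ∀ x ∈ S, f x < p ^ B) :
    (∏ x ∈ S, f x).factorization p =
      ∑ e ∈ Finset.Ico 1 B, (S.filter (fun x => p ^ e ∣ f x)).card := by
  rw [Nat.factorization_prod_apply fun x hx => (hpos x hx).ne']
  simp_rw [Finset.card_filter]
  rw [Finset.sum_comm]
  refine Finset.sum_congr rfl fun x hx => ?_
  rw [Nat.factorization_eq_card_pow_dvd_of_lt hp (hpos x hx) (hB x hx), Finset.card_filter]

/-- If for every integer `b > 1` the number of weights `a_j` divisible by `b` is at most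
the number of degrees `d_i` divisible by `b`, then `a₀·…·a_N` divides `d₁·…·d_k`. -/
theorem stmt16 (N k : ℕ) (a d : ℕ → ℕ)
    (ha_pos : ∀ j, j ≤ N → 0 < a j)
    (hd_pos : ∀ i, 1 ≤ i → i ≤ k → 0 < d i)
    (hdiv : ∀ b : ℕ, 1 < b →
      ((Finset.Icc 0 N).filter (fun j => b ∣ a j)).card ≤
        ((Finset.Icc 1 k).filter (fun i => b ∣ d i)).card) :
    (∏ j ∈ Finset.Icc 0 N, a j) ∣ ∏ i ∈ Finset.Icc 1 k, d i := by
  have ha : ∀ j ∈ Finset.Icc 0 N, 0 < a j := fun j hj => ha_pos j (Finset.mem_Icc.1 hj).2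
  have hd : ∀ i ∈ Finset.Icc 1 k, 0 < d i := fun i hi =>
    hd_pos i (Finset.mem_Icc.1 hi).1 (Finset.mem_Icc.1 hi).2
  rw [← Nat.factorization_prime_le_iff_dvd
    (Finset.prod_ne_zero_iff.2 fun j hj => (ha j hj).ne')
    (Finset.prod_ne_zero_iff.2 fun i hi => (hd i hi).ne')]
  intro p hp
  -- `B` bounds every `a j` and every `d i`, and `B < p ^ B`.
  set B := ∑ j ∈ Finset.Icc 0 N, a j + ∑ i ∈ Finset.Icc 1 k, d i with hB
  have hlt : B < p ^ B := Nat.lt_pow_self hp.one_lt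
  have haB : ∀ j ∈ Finset.Icc 0 N, a j < p ^ B := fun j hj => by
    have := Finset.single_le_sum (f := a) (fun _ _ => Nat.zero_le _) hj
    omega
  have hdB : ∀ i ∈ Finset.Icc 1 k, d i < p ^ B := fun i hi => by
    have := Finset.single_le_sum (f := d) (fun _ _ => Nat.zero_le _) hi
    omega
  rw [factorization_prod_eq_sum_card hp _ a B ha haB,
    factorization_prod_eq_sum_card hp _ d B hd hdB]
  refine Finset.sum_le_sum fun e he => hdiv _ (Nat.one_lt_pow ?_ hp.one_lt)
  have := (Finset.mem_Ico.1 he).1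
  omega
end
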